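/- arXiv:2305.09339 — 2 statements merged into one kernel-verified Lean document; each statement's English description precedes it below -/
import Mathlib

section
/- (Heat flow yields classical solutions of the pressureless viscous system.) Let ν > 0 and let ρ : ℝ × ℝ³ → ℝ be a C³ function with ρ > 0 everywhere satisfying the heat equation ∂_t ρ = 2ν Δρ. Define u = −2ν ∇(log ρ) (spatial gradient). Then (ρ, u) satisfies pointwise both the continuity equation ∂_t ρ + div(ρ u) = 0 and the pressureless viscous momentum equation ∂_t(ρ u) + div(ρ u ⊗ u) − 2ν div(ρ Du) = 0. -/
open scoped BigOperators
open MeasureTheory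

noncomputable section

/-- Points of `ℝ³`, realized as `Fin 3 → ℝ`. -/
abbrev V3 : Type := Fin 3 → ℝ

/-- Partial derivative `∂ᵢ f` of a scalar field. -/
def pd (i : Fin 3) (f : V3 → ℝ) (x : V3) : ℝ := fderiv ℝ f x (Pi.single i 1)

/-- Gradient `∇f` of a scalar field. -/
def grad (f : V3 → ℝ) (x : V3) : V3 := fun i => pd i f x

/-- Divergence `div u` of a vector field. -/
def vdiv (u : V3 → V3) (x : V3) : ℝ := ∑ i, pd i (fun y => u y i) x

/-- Laplacian `Δf` of a scalar field. -/
def lap (f : V3 → ℝ) (x : V3) : ℝ := ∑ i, pd i (fun y => pd i f y) x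

/-- Divergence (row-wise) of a matrix field: `(div M)_i = ∑_j ∂_j M_{ij}`. -/
def mdiv (M : V3 → Fin 3 → Fin 3 → ℝ) (x : V3) : V3 :=
  fun i => ∑ j, pd j (fun y => M y i j) x

/-- Jacobian matrix `(∇u)_{ij} = ∂_j u_i` of a vector field. -/
def jacb (u : V3 → V3) (x : V3) : Fin 3 → Fin 3 → ℝ := fun i j => pd j (fun y => u y i) x

/-- Symmetric part `Du = (∇u + ∇ᵀu)/2` of the Jacobian. -/
def symJ (u : V3 → V3) (x : V3) : Fin 3 → Fin 3 → ℝ :=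
  fun i j => (jacb u x i j + jacb u x j i) / 2

/-- Antisymmetric part `Au = (∇u − ∇ᵀu)/2` of the Jacobian. -/
def asymJ (u : V3 → V3) (x : V3) : Fin 3 → Fin 3 → ℝ :=
  fun i j => (jacb u x i j - jacb u x j i) / 2

/-- Euclidean dot product on `ℝ³`. -/
def dot (a b : V3) : ℝ := ∑ i, a i * b i

/-- Squared Euclidean norm on `ℝ³`. -/
def normSq (a : V3) : ℝ := ∑ i, (a i) ^ 2

/-- Directional derivative on space-time. -/
def dd (v : ℝ × V3) (G : ℝ × V3 → ℝ) (p : ℝ × V3) : ℝ := fderiv ℝ G p v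

/-- Spatial basis direction. -/
def ee (i : Fin 3) : ℝ × V3 := (0, Pi.single i 1)

lemma dd_contDiff {n m : WithTop ℕ∞} (v : ℝ × V3) {G : ℝ × V3 → ℝ} (hG : ContDiff ℝ n G)
    (h : m + 1 ≤ n) : ContDiff ℝ m (dd v G) :=
  (hG.fderiv_right h).clm_apply contDiff_const

lemma dd_comm (v w : ℝ × V3) {G : ℝ × V3 → ℝ} (hG : ContDiff ℝ 2 G) (p : ℝ × V3) :
    dd v (dd w G) p = dd w (dd v G) p := by
  have hd : DifferentiableAt ℝ (fderiv ℝ G) p :=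
    ((hG.fderiv_right (m := 1) (by norm_num)).differentiable (by norm_num)) p
  have key : ∀ a b : ℝ × V3, dd a (dd b G) p = fderiv ℝ (fderiv ℝ G) p a b := by
    intro a b
    have h1 : HasFDerivAt (dd b G) ((fderiv ℝ (fderiv ℝ G) p).flip b) p := by
      have := hd.hasFDerivAt.clm_apply (hasFDerivAt_const b p)
      have e : (fderiv ℝ G p).comp (0 : ℝ × V3 →L[ℝ] ℝ × V3) + (fderiv ℝ (fderiv ℝ G) p).flip b
          = (fderiv ℝ (fderiv ℝ G) p).flip b := by
        rw [ContinuousLinearMap.comp_zero, zero_add]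
      exact e ▸ this
    unfold dd at h1 ⊢
    rw [h1.fderiv]; rfl
  rw [key, key]
  exact (hG.contDiffAt.isSymmSndFDerivAt (by simp)).eq v w

lemma pd_slice (i : Fin 3) {G : ℝ × V3 → ℝ} (hG : Differentiable ℝ G) (t : ℝ) (x : V3) :
    pd i (fun y => G (t, y)) x = dd (ee i) G (t, x) := by
  have h := (hG (t, x)).hasFDerivAt.comp x (hasFDerivAt_prodMk_right t x)
  unfold pd dd ee
  have h2 : fderiv ℝ (fun y => G (t, y)) x = _ := h.fderiv
  rw [h2]; simp

lemma deriv_slice {G : ℝ × V3 → ℝ} (hG : Differentiable ℝ G) (t : ℝ) (x : V3) :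
    deriv (fun s => G (s, x)) t = dd (1, 0) G (t, x) := by
  have h := (hG (t, x)).hasFDerivAt.comp t (hasFDerivAt_prodMk_left (𝕜 := ℝ) t x)
  have h2 : deriv (fun s => G (s, x)) t = _ := h.hasDerivAt.deriv
  rw [h2]; simp [dd]

lemma dd_const_mul (v : ℝ × V3) (c : ℝ) {G : ℝ × V3 → ℝ} (hG : Differentiable ℝ G) (p : ℝ × V3) :
    dd v (fun q => c * G q) p = c * dd v G p := by
  unfold dd
  rw [fderiv_const_mul (hG p)]; simp

lemma dd_add (v : ℝ × V3) {G H : ℝ × V3 → ℝ} (hG : Differentiable ℝ G) (hH : Differentiable ℝ H)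
    (p : ℝ × V3) : dd v (fun q => G q + H q) p = dd v G p + dd v H p := by
  unfold dd
  rw [fderiv_fun_add (hG p) (hH p)]; simp

lemma diff_div {G H : ℝ × V3 → ℝ} (hG : Differentiable ℝ G) (hH : Differentiable ℝ H)
    (h0 : ∀ p, H p ≠ 0) : Differentiable ℝ (fun q => G q / H q) := by
  simp only [div_eq_mul_inv]
  exact hG.mul (hH.inv h0)

lemma dd_div (v : ℝ × V3) {G H : ℝ × V3 → ℝ} (hG : Differentiable ℝ G) (hH : Differentiable ℝ H)
    (h0 : ∀ p, H p ≠ 0) (p : ℝ × V3) :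
    dd v (fun q => G q / H q) p = dd v G p / H p - G p * dd v H p / H p ^ 2 := by
  unfold dd
  have h := (hG p).hasFDerivAt.mul ((hasDerivAt_inv (h0 p)).comp_hasFDerivAt p (hH p).hasFDerivAt)
  have h1 : (fun q => G q / H q) = G * (fun y => y⁻¹) ∘ H := by
    funext q; simp [div_eq_mul_inv]
  rw [h1, h.fderiv]
  simp
  ring

/-- if `ρ > 0` solves the heat equation `∂ₜρ = 2νΔρ`, then
`(ρ, u)` with `u = −2ν∇log ρ` is a classical solution of the pressureless
viscous system. -/
theorem heat_flow_solves_pressureless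
    (ν : ℝ) (hν : 0 < ν)
    (ρ : ℝ → V3 → ℝ)
    (hρ : ContDiff ℝ 3 (fun p : ℝ × V3 => ρ p.1 p.2))
    (hpos : ∀ t x, 0 < ρ t x)
    (hheat : ∀ t x, deriv (fun s => ρ s x) t = 2 * ν * lap (ρ t) x)
    (u : ℝ → V3 → V3)
    (hu : ∀ t x, u t x = -((2 * ν) • grad (fun y => Real.log (ρ t y)) x)) :
    (∀ t x, deriv (fun s => ρ s x) t + vdiv (fun y => ρ t y • u t y) x = 0)
    ∧ (∀ t x,
        (fun i => deriv (fun s => ρ s x * u s x i) t)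
          + mdiv (fun y i j => ρ t y * u t y i * u t y j) x
          - (2 * ν) • mdiv (fun y i j => ρ t y * symJ (u t) y i j) x
        = 0) := by
  obtain ⟨F, hF⟩ : ∃ F : ℝ × V3 → ℝ, F = fun p : ℝ × V3 => ρ p.1 p.2 := ⟨_, rfl⟩
  have hρF : ∀ t x, ρ t x = F (t, x) := fun t x => by rw [hF]
  rw [← hF] at hρ
  have hρt : ∀ t, ρ t = fun y => F (t, y) := fun t => funext (hρF t)
  have hne : ∀ p, F p ≠ 0 := fun p => by rw [hF]; exact (hpos _ _).ne'
  have dF : Differentiable ℝ F := hρ.differentiable (by norm_num)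
  have c1 : ∀ i, ContDiff ℝ 2 (dd (ee i) F) := fun i => dd_contDiff _ hρ (by norm_num)
  have d1 : ∀ i, Differentiable ℝ (dd (ee i) F) := fun i => (c1 i).differentiable (by norm_num)
  have c2 : ∀ i j, ContDiff ℝ 1 (dd (ee j) (dd (ee i) F)) :=
    fun i j => dd_contDiff _ (c1 i) (by norm_num)
  have d2 : ∀ i j, Differentiable ℝ (dd (ee j) (dd (ee i) F)) :=
    fun i j => (c2 i j).differentiable (by norm_num)
  have hF2 : ContDiff ℝ 2 F := hρ.of_le (by norm_num)
  have hlap : ∀ t x, lap (ρ t) x = ∑ j, dd (ee j) (dd (ee j) F) (t, x) := by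
    intro t x
    unfold lap
    refine Finset.sum_congr rfl fun j _ => ?_
    simp only [hρt, pd_slice j dF]
    rw [pd_slice j (d1 j)]
  have hheat' : dd (1, 0) F = fun p => 2 * ν * ∑ j, dd (ee j) (dd (ee j) F) p := by
    funext ⟨t, x⟩
    have h := hheat t x
    rw [hlap] at h
    simp only [hρF] at h
    rw [deriv_slice dF] at h
    exact h
  have hui : ∀ t x i, u t x i = -(2 * ν) * (dd (ee i) F (t, x) / F (t, x)) := by
    intro t x i
    have hdx : DifferentiableAt ℝ (fun y => F (t, y)) x :=
      (dF (t, x)).comp x (hasFDerivAt_prodMk_right t x).differentiableAt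
    have hl : pd i (fun y => Real.log (F (t, y))) x = dd (ee i) F (t, x) / F (t, x) := by
      rw [← pd_slice i dF]
      unfold pd
      rw [fderiv.log hdx (hne _)]
      simp [div_eq_inv_mul]
    rw [hu]
    simp only [grad, hρF, Pi.neg_apply, Pi.smul_apply, smul_eq_mul, hl]
    ring
  have hρu : ∀ t x i, ρ t x * u t x i = -(2 * ν) * dd (ee i) F (t, x) := by
    intro t x i
    rw [hui, hρF]
    have := hne (t, x)
    field_simp
  have dq : ∀ i, Differentiable ℝ (fun q => dd (ee i) F q / F q) :=
    fun i => diff_div (d1 i) dF hne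
  have hjac : ∀ t x i j, jacb (u t) x i j = -(2 * ν) *
      (dd (ee j) (dd (ee i) F) (t, x) / F (t, x)
        - dd (ee i) F (t, x) * dd (ee j) F (t, x) / F (t, x) ^ 2) := by
    intro t x i j
    unfold jacb
    simp only [hui]
    rw [pd_slice j (G := fun q => -(2 * ν) * (dd (ee i) F q / F q)) ((dq i).const_mul _),
      dd_const_mul _ _ (dq i), dd_div _ (d1 i) dF hne]
  have hsym : ∀ t x i j, ρ t x * symJ (u t) x i j = -(2 * ν) *
      (dd (ee j) (dd (ee i) F) (t, x)
        - dd (ee i) F (t, x) * dd (ee j) F (t, x) / F (t, x)) := by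
    intro t x i j
    unfold symJ
    rw [hjac, hjac, dd_comm (ee i) (ee j) hF2, hρF]
    have := hne (t, x)
    field_simp
    ring
  have dP : ∀ i j, Differentiable ℝ (fun q => dd (ee i) F q * dd (ee j) F q / F q) :=
    fun i j => diff_div ((d1 i).mul (d1 j)) dF hne
  refine ⟨fun t x => ?_, fun t x => ?_⟩
  · rw [hheat, hlap]
    unfold vdiv
    simp only [Pi.smul_apply, smul_eq_mul, hρu]
    have : ∀ i, pd i (fun y => -(2 * ν) * dd (ee i) F (t, y)) x
        = -(2 * ν) * dd (ee i) (dd (ee i) F) (t, x) := fun i => by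
      rw [pd_slice i (G := fun q => -(2 * ν) * dd (ee i) F q) ((d1 i).const_mul _),
        dd_const_mul _ _ (d1 i)]
    simp only [this, ← Finset.mul_sum]
    ring
  · funext i
    have ht : deriv (fun s => ρ s x * u s x i) t
        = -(2 * ν) * (2 * ν * ∑ j, dd (ee j) (dd (ee j) (dd (ee i) F)) (t, x)) := by
      simp only [hρu]
      rw [deriv_slice (G := fun q => -(2 * ν) * dd (ee i) F q) ((d1 i).const_mul _),
        dd_const_mul _ _ (d1 i), dd_comm _ _ hF2, hheat', dd_const_mul]
      · have h3 : ∀ j, dd (ee i) (dd (ee j) (dd (ee j) F)) (t, x)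
            = dd (ee j) (dd (ee j) (dd (ee i) F)) (t, x) := fun j => by
          rw [dd_comm _ _ (c1 j)]
          congr 1
          funext p
          exact dd_comm _ _ hF2 p
        simp only [Fin.sum_univ_three]
        rw [dd_add _ (G := fun p => dd (ee 0) (dd (ee 0) F) p + dd (ee 1) (dd (ee 1) F) p)
            ((d2 0 0).add (d2 1 1)) (d2 2 2), dd_add _ (d2 0 0) (d2 1 1), h3, h3, h3]
      · exact Differentiable.fun_sum fun j _ => d2 j j
    have hA : ∀ j, pd j (fun y => ρ t y * u t y i * u t y j) x
        = (2 * ν) ^ 2 * dd (ee j) (fun q => dd (ee i) F q * dd (ee j) F q / F q) (t, x) := by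
      intro j
      have : ∀ y, ρ t y * u t y i * u t y j
          = (2 * ν) ^ 2 * (dd (ee i) F (t, y) * dd (ee j) F (t, y) / F (t, y)) := fun y => by
        rw [hρu, hui]; ring
      simp only [this]
      rw [pd_slice j (G := fun q => (2 * ν) ^ 2 * (dd (ee i) F q * dd (ee j) F q / F q))
        ((dP i j).const_mul _), dd_const_mul _ _ (dP i j)]
    have hB : ∀ j, pd j (fun y => ρ t y * symJ (u t) y i j) x
        = -(2 * ν) * dd (ee j) (dd (ee j) (dd (ee i) F)) (t, x)
          + (2 * ν) * dd (ee j) (fun q => dd (ee i) F q * dd (ee j) F q / F q) (t, x) := by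
      intro j
      have : ∀ y, ρ t y * symJ (u t) y i j
          = -(2 * ν) * dd (ee j) (dd (ee i) F) (t, y)
            + (2 * ν) * (dd (ee i) F (t, y) * dd (ee j) F (t, y) / F (t, y)) := fun y => by
        rw [hsym]; ring
      simp only [this]
      rw [pd_slice j (G := fun q => -(2 * ν) * dd (ee j) (dd (ee i) F) q
          + (2 * ν) * (dd (ee i) F q * dd (ee j) F q / F q))
        (((d2 i j).const_mul _).add ((dP i j).const_mul _)),
        dd_add _ ((d2 i j).const_mul _) ((dP i j).const_mul _),
        dd_const_mul _ _ (d2 i j), dd_const_mul _ _ (dP i j)]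
    simp only [Pi.add_apply, Pi.sub_apply, Pi.smul_apply, smul_eq_mul, mdiv, Pi.zero_apply,
      ht, hA, hB, Fin.sum_univ_three]
    ring
end
end

section
/- Let f : ℝ³ → ℝ be a C³ function and W : ℝ³ → ℝ³ a C² vector field, both ℤ³-periodic. Then ∫_{[0,1]³} f (W · ∇(Δf)) dx = ∫_{[0,1]³} [ (1/2) |∇f|² div W + f (∇f · ∇(div W)) + (∇f ⊗ ∇f) : ∇W ] dx. -/
open scoped BigOperators
open MeasureTheory

noncomputable section

theorem pd_contDiff {n m : WithTop ℕ∞} (i : Fin 3) {f : V3 → ℝ} (hf : ContDiff ℝ n f)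
    (h : m + 1 ≤ n) : ContDiff ℝ m (fun x => pd i f x) := by
  unfold pd
  exact (hf.fderiv_right h).clm_apply contDiff_const

theorem pd_per (i : Fin 3) {f : V3 → ℝ}
    (hper : ∀ x (k : Fin 3 → ℤ), f (x + fun i => (k i : ℝ)) = f x) :
    ∀ x (k : Fin 3 → ℤ), pd i f (x + fun i => (k i : ℝ)) = pd i f x := by
  intro x k
  unfold pd
  rw [← fderiv_comp_add_right]
  simp only [hper]

theorem pd_mul {f g : V3 → ℝ} (hf : ContDiff ℝ 1 f) (hg : ContDiff ℝ 1 g) (i : Fin 3) (x : V3) :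
    pd i (fun y => f y * g y) x = pd i f x * g x + f x * pd i g x := by
  unfold pd
  rw [fderiv_fun_mul (hf.differentiable (by simp) x) (hg.differentiable (by simp) x)]
  simp
  ring

theorem pd_add {f g : V3 → ℝ} (hf : ContDiff ℝ 1 f) (hg : ContDiff ℝ 1 g) (i : Fin 3) (x : V3) :
    pd i (fun y => f y + g y) x = pd i f x + pd i g x := by
  unfold pd
  rw [fderiv_fun_add (hf.differentiable (by simp) x) (hg.differentiable (by simp) x)]
  simp

theorem pd_sub {f g : V3 → ℝ} (hf : ContDiff ℝ 1 f) (hg : ContDiff ℝ 1 g) (i : Fin 3) (x : V3) :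
    pd i (fun y => f y - g y) x = pd i f x - pd i g x := by
  unfold pd
  rw [fderiv_fun_sub (hf.differentiable (by simp) x) (hg.differentiable (by simp) x)]
  simp

theorem pd_const (c : ℝ) (i : Fin 3) (x : V3) : pd i (fun _ => c) x = 0 := by
  unfold pd
  simp

theorem pd_sum {f : Fin 3 → V3 → ℝ} (hf : ∀ k, ContDiff ℝ 1 (f k)) (i : Fin 3) (x : V3) :
    pd i (fun y => ∑ k, f k y) x = ∑ k, pd i (f k) x := by
  unfold pd
  rw [fderiv_fun_sum (fun k _ => (hf k).differentiable (by simp) x)]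
  simp

theorem pd_comm {f : V3 → ℝ} (hf : ContDiff ℝ 2 f) (i j : Fin 3) (x : V3) :
    pd i (fun y => pd j f y) x = pd j (fun y => pd i f y) x := by
  have hd : DifferentiableAt ℝ (fderiv ℝ f) x :=
    (hf.fderiv_right (m := 1) (by norm_num)).differentiable (by simp) x
  have key : ∀ a b : Fin 3, pd a (fun y => pd b f y) x
      = fderiv ℝ (fderiv ℝ f) x (Pi.single a 1) (Pi.single b 1) := by
    intro a b
    unfold pd
    rw [fderiv_clm_apply hd (differentiableAt_const _)]
    simp
  rw [key, key]
  exact (hf.contDiffAt.isSymmSndFDerivAt (by simp)) _ _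

theorem integral_div_zero (G : Fin 3 → V3 → ℝ) (hG : ∀ i, ContDiff ℝ 1 (G i))
    (hper : ∀ i x (k : Fin 3 → ℤ), G i (x + fun i => (k i : ℝ)) = G i x) :
    ∫ x in Set.Icc (0 : V3) 1, ∑ i, pd i (G i) x = 0 := by
  have hc : Continuous (fun x => ∑ i, pd i (G i) x) :=
    continuous_finset_sum _ fun i _ => (pd_contDiff (m := 0) i (hG i) (by simp)).continuous
  have := integral_divergence_of_hasFDerivAt_off_countable' (0 : V3) 1 zero_le_one G
    (fun i x => fderiv ℝ (G i) x) ∅ Set.countable_empty (fun i => (hG i).continuous.continuousOn)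
    (fun x _ i => ((hG i).differentiable (by simp) x).hasFDerivAt)
    (hc.continuousOn.integrableOn_compact isCompact_Icc)
  unfold pd
  rw [this]
  refine Finset.sum_eq_zero fun i _ => ?_
  rw [sub_eq_zero]
  congr 1
  funext x
  rw [← hper i (i.insertNth ((0 : V3) i) x) (Pi.single i 1)]
  congr 1
  funext j
  refine Fin.succAboveCases i ?_ (fun j => ?_) j
  · simp
  · simp

/-- periodic integration-by-parts identity for the capillary
remainder term:
`∫ f (W·∇Δf) = ∫ [½|∇f|² div W + f (∇f·∇(div W)) + (∇f⊗∇f) : ∇W]`. -/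
theorem periodic_capillary_ibp
    (f : V3 → ℝ) (W : V3 → V3)
    (hf : ContDiff ℝ 3 f) (hW : ContDiff ℝ 2 (fun x : V3 => W x))
    (hfper : ∀ x (k : Fin 3 → ℤ), f (x + fun i => (k i : ℝ)) = f x)
    (hWper : ∀ x (k : Fin 3 → ℤ), W (x + fun i => (k i : ℝ)) = W x) :
    ∫ x in Set.Icc (0 : V3) 1, f x * dot (W x) (grad (fun y => lap f y) x)
    = ∫ x in Set.Icc (0 : V3) 1,
        ((1 / 2) * normSq (grad f x) * vdiv W x
          + f x * dot (grad f x) (grad (fun y => vdiv W y) x)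
          + ∑ i, ∑ j, grad f x i * grad f x j * jacb W x i j) := by
  have hW1 : ∀ i, ContDiff ℝ 2 (fun x => W x i) := fun i => contDiff_pi.1 hW i
  have cf : ContDiff ℝ 1 f := hf.of_le (by norm_num)
  have cf2 : ContDiff ℝ 2 f := hf.of_le (by norm_num)
  have cW : ∀ i, ContDiff ℝ 1 (fun x => W x i) := fun i => (hW1 i).of_le (by norm_num)
  have cp2 : ∀ i, ContDiff ℝ 2 (fun x => pd i f x) := fun i => pd_contDiff i hf (by norm_num)
  have cp : ∀ i, ContDiff ℝ 1 (fun x => pd i f x) := fun i => (cp2 i).of_le (by norm_num)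
  have cL : ContDiff ℝ 1 (fun x => lap f x) := by
    unfold lap
    exact ContDiff.sum fun i _ => pd_contDiff i (cp2 i) (by norm_num)
  have cV : ContDiff ℝ 1 (fun x => vdiv W x) := by
    unfold vdiv
    exact ContDiff.sum fun i _ => pd_contDiff i (hW1 i) (by norm_num)
  have pL : ∀ x (k : Fin 3 → ℤ), lap f (x + fun i => (k i : ℝ)) = lap f x := by
    intro x k
    unfold lap
    exact Finset.sum_congr rfl fun i _ => pd_per i (pd_per i hfper) x k
  have pV : ∀ x (k : Fin 3 → ℤ), vdiv W (x + fun i => (k i : ℝ)) = vdiv W x := by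
    intro x k
    unfold vdiv
    exact Finset.sum_congr rfl fun i _ => pd_per i (fun x k => by rw [hWper]) x k
  have pp := fun i => pd_per i hfper
  have cA : ContDiff ℝ 1 (fun x => ∑ i, W x i * pd i f x) :=
    ContDiff.sum fun i _ => (cW i).mul (cp i)
  have cN : ContDiff ℝ 1 (fun x => ∑ i, pd i f x * pd i f x) :=
    ContDiff.sum fun i _ => (cp i).mul (cp i)
  have ch : ContDiff ℝ 1 (fun _ : V3 => (1 / 2 : ℝ)) := contDiff_const
  let G : Fin 3 → V3 → ℝ := fun j x =>
    f x * (W x j * lap f x) - f x * (vdiv W x * pd j f x)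
      - (∑ i, W x i * pd i f x) * pd j f x
      + 1 / 2 * (W x j * ∑ i, pd i f x * pd i f x)
  have c1 := fun j => cf.mul ((cW j).mul cL)
  have c2 := fun j => cf.mul (cV.mul (cp j))
  have c3 := fun j => cA.mul (cp j)
  have c4 := fun j => ch.mul ((cW j).mul cN)
  have hG : ∀ j, ContDiff ℝ 1 (G j) := fun j => (((c1 j).sub (c2 j)).sub (c3 j)).add (c4 j)
  have hz := integral_div_zero G hG (by
    intro i x k
    simp only [G, hfper, hWper, pL, pV, pp])
  have hdG : ∀ j x, pd j (G j) x =
      (pd j f x * (W x j * lap f x)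
        + f x * (pd j (fun y => W y j) x * lap f x + W x j * pd j (fun y => lap f y) x))
      - (pd j f x * (vdiv W x * pd j f x) + f x * (pd j (fun y => vdiv W y) x * pd j f x
          + vdiv W x * pd j (fun y => pd j f y) x))
      - ((∑ i, (pd j (fun y => W y i) x * pd i f x + W x i * pd j (fun y => pd i f y) x)) * pd j f x
          + (∑ i, W x i * pd i f x) * pd j (fun y => pd j f y) x)
      + 1 / 2 * (pd j (fun y => W y j) x * (∑ i, pd i f x * pd i f x)
          + W x j * ∑ i, (pd j (fun y => pd i f y) x * pd i f x
              + pd i f x * pd j (fun y => pd i f y) x)) := by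
    intro j x
    simp only [G]
    rw [pd_add (((c1 j).sub (c2 j)).sub (c3 j)) (c4 j), pd_sub ((c1 j).sub (c2 j)) (c3 j),
      pd_sub (c1 j) (c2 j), pd_mul cf ((cW j).mul cL), pd_mul (cW j) cL,
      pd_mul cf (cV.mul (cp j)), pd_mul cV (cp j), pd_mul cA (cp j),
      pd_mul ch ((cW j).mul cN), pd_mul (cW j) cN, pd_const,
      pd_sum (fun i => (cW i).mul (cp i)), pd_sum (fun i => (cp i).mul (cp i))]
    simp only [pd_mul (cW _) (cp _), pd_mul (cp _) (cp _)]
    ring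
  rw [← sub_eq_zero, ← integral_sub, ← hz]
  · congr 1
    funext x
    simp only [hdG]
    have e1 := pd_comm cf2 1 0 x
    have e2 := pd_comm cf2 2 0 x
    have e3 := pd_comm cf2 2 1 x
    have eL : lap f x = ∑ i, pd i (fun y => pd i f y) x := rfl
    have eV : vdiv W x = ∑ i, pd i (fun y => W y i) x := rfl
    simp only [dot, normSq, grad, jacb]
    generalize hgL : lap f x = L at *
    generalize hgV : vdiv W x = V at *
    simp only [Fin.sum_univ_three] at *
    rw [e1, e2, e3, eL, eV]
    ring
  · refine Continuous.integrableOn_Icc ?_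
    have k0 : ∀ i, Continuous (fun x => pd i (fun y => lap f y) x) :=
      fun i => (pd_contDiff (m := 0) i cL (by simp)).continuous
    have k1 := fun i => (cW i).continuous
    have k2 := cf.continuous
    unfold dot grad
    fun_prop
  · refine Continuous.integrableOn_Icc ?_
    have k0 : ∀ i, Continuous (fun x => pd i (fun y => vdiv W y) x) :=
      fun i => (pd_contDiff (m := 0) i cV (by simp)).continuous
    have k1 : ∀ i j, Continuous (fun x => pd j (fun y => W y i) x) :=
      fun i j => (pd_contDiff (m := 0) j (cW i) (by simp)).continuous
    have k2 := cf.continuous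
    have k3 := cV.continuous
    have k4 := fun i => (cp i).continuous
    unfold dot normSq jacb grad
    fun_prop
end
end
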